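/- Let p ∈ (1;2), let a < b, let y₀ ∈ ℝ, let x : [a;b] → ℝ be continuous with finite p-variation, and let F : ℝ → ℝ be globally 1-Lipschitz, i.e. there is K ≥ 0 with |F(u) − F(v)| ≤ K·|u − v| for all u, v ∈ ℝ. Then there exists a function y : [a;b] → ℝ of finite p-variation such that for every t ∈ [a;b] the Riemann–Stieltjes integral ∫_a^t F(y(s)) dx(s) exists and y(t) = y₀ + ∫_a^t F(y(s)) dx(s). -/

import Mathlib

open Filter Set

/-- Truncated variation of `f` on `[a;b]` with truncation parameter `δ`. -/
noncomputable def truncVar (f : ℝ → ℝ) (δ a b : ℝ) : ENNReal :=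
  ⨆ (n : ℕ) (t : Fin (n + 1) → ℝ) (_ : StrictMono t)
    (_ : ∀ i, t i ∈ Set.Icc a b),
    ∑ i : Fin n, ENNReal.ofReal (|f (t i.succ) - f (t i.castSucc)| - δ)

/-- p-variation of `f` on `[a;b]`. -/
noncomputable def pVar (f : ℝ → ℝ) (p a b : ℝ) : ENNReal :=
  ⨆ (n : ℕ) (t : Fin (n + 1) → ℝ) (_ : StrictMono t)
    (_ : ∀ i, t i ∈ Set.Icc a b),
    ∑ i : Fin n, ENNReal.ofReal (|f (t i.succ) - f (t i.castSucc)| ^ p)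

/-- The p-variation norm `(V^p(f,[a;b]))^{1/p}`. -/
noncomputable def pVarNorm (f : ℝ → ℝ) (p a b : ℝ) : ℝ :=
  (pVar f p a b).toReal ^ (1 / p)

/-- Oscillation norm `sup_{a ≤ s < t ≤ b} |f t - f s|`. -/
noncomputable def oscNorm (f : ℝ → ℝ) (a b : ℝ) : ℝ :=
  sSup {x | ∃ s ∈ Set.Icc a b, ∃ t ∈ Set.Icc a b, s < t ∧ x = |f t - f s|}

/-- Sup norm `sup_{a ≤ t ≤ b} |f t|`. -/
noncomputable def supNorm (f : ℝ → ℝ) (a b : ℝ) : ℝ :=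
  sSup {x | ∃ t ∈ Set.Icc a b, x = |f t|}

/-- `I` is the Riemann–Stieltjes integral `∫_a^b f dg`. -/
def RSIntegral (f g : ℝ → ℝ) (a b : ℝ) (I : ℝ) : Prop :=
  ∀ ε > (0 : ℝ), ∃ δ > (0 : ℝ), ∀ (n : ℕ) (t : Fin (n + 1) → ℝ) (ξ : Fin n → ℝ),
    StrictMono t → t 0 = a → t (Fin.last n) = b →
    (∀ i : Fin n, t i.castSucc ≤ ξ i ∧ ξ i ≤ t i.succ) →
    (∀ i : Fin n, t i.succ - t i.castSucc < δ) →
    |∑ i : Fin n, f (ξ i) * (g (t i.succ) - g (t i.castSucc)) - I| < ε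

/-- `f` is regulated on `[a;b]`: all the relevant one-sided limits exist and are finite. -/
def Regulated (f : ℝ → ℝ) (a b : ℝ) : Prop :=
  (∃ L : ℝ, Tendsto f (nhdsWithin a (Set.Ioi a)) (nhds L)) ∧
  (∃ L : ℝ, Tendsto f (nhdsWithin b (Set.Iio b)) (nhds L)) ∧
  ∀ x ∈ Set.Ioo a b,
    (∃ L : ℝ, Tendsto f (nhdsWithin x (Set.Iio x)) (nhds L)) ∧
    (∃ L : ℝ, Tendsto f (nhdsWithin x (Set.Ioi x)) (nhds L))

/-- `f` and `g` have no common points of discontinuity on `[a;b]`. -/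
def NoCommonDiscont (f g : ℝ → ℝ) (a b : ℝ) : Prop :=
  ∀ x ∈ Set.Icc a b,
    ContinuousWithinAt f (Set.Icc a b) x ∨ ContinuousWithinAt g (Set.Icc a b) x

lemma davie_split (w : ℕ → ℕ → ℝ) (h0 : ∀ i j, 0 ≤ w i j)
    (hs : ∀ i j k, i ≤ j → j ≤ k → w i j + w j k ≤ w i k) (i j : ℕ) (hij : i < j) :
    ∃ m, i ≤ m ∧ m < j ∧ w i m ≤ w i j / 2 ∧ w (m+1) j ≤ w i j / 2 := by
  classical
  have hd : ∀ k, w k k ≤ 0 := fun k => by have := hs k k k le_rfl le_rfl; linarith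
  have hi : w i i ≤ w i j / 2 := by have := hd i; have := h0 i j; linarith
  let P : ℕ → Prop := fun m => w i m ≤ w i j / 2
  have h1 : i ≤ j - 1 := by omega
  refine ⟨Nat.findGreatest P (j-1), Nat.le_findGreatest h1 hi, ?_, ?_, ?_⟩
  · have := Nat.findGreatest_le (P := P) (j-1); omega
  · exact Nat.findGreatest_spec (P := P) h1 hi
  · set m := Nat.findGreatest P (j-1) with hm
    have hmj : m ≤ j - 1 := Nat.findGreatest_le (P := P) (j-1)
    have him : i ≤ m := Nat.le_findGreatest h1 hi
    by_cases h : m + 1 ≤ j - 1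
    · have h2 : ¬ P (m+1) := Nat.findGreatest_is_greatest (P := P) (by omega) h
      have h3 : w i j / 2 < w i (m+1) := not_le.mp h2
      have := hs i (m+1) j (by omega) (by omega)
      linarith
    · have : m + 1 = j := by omega
      rw [this]
      have := hd j; have := h0 i j; linarith

lemma davie_step (K M C d l q : ℝ) (hK : 0 ≤ K) (hM : 0 ≤ M) (hC : 0 ≤ C) (hq : 0 < q)
    (hl : l = (1/2 : ℝ) ^ (1/q)) 
    (hCd : 2 * l^2 * C + 2 * K * M + K * C * d ≤ C)
    (F : ℝ → ℝ) (hF : ∀ u v : ℝ, |F u - F v| ≤ K * |u - v|)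
    (w : ℕ → ℕ → ℝ) (h0 : ∀ i j, 0 ≤ w i j)
    (hs : ∀ i j k, i ≤ j → j ≤ k → w i j + w j k ≤ w i k)
    (X y : ℕ → ℝ) (hX : ∀ i j, i ≤ j → |X j - X i| ≤ w i j ^ (1/q))
    (hd : ∀ i j, i ≤ j → w i j ^ (1/q) ≤ d)
    (hy : ∀ k, y (k+1) = y k + F (y k) * (X (k+1) - X k))
    (N : ℕ) (hMN : ∀ k, k ≤ N → |F (y k)| ≤ M) :
    ∀ n i j, i ≤ j → j ≤ N → j - i ≤ n →
      |y j - y i - F (y i) * (X j - X i)| ≤ C * (w i j ^ (1/q))^2 := by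
  have hq' : 0 ≤ 1/q := by positivity
  have hmono : ∀ i j i' j', i ≤ i' → i' ≤ j' → j' ≤ j → w i' j' ^ (1/q) ≤ w i j ^ (1/q) := by
    intro i j i' j' h1 h2 h3
    apply Real.rpow_le_rpow (h0 _ _) _ hq'
    have := hs i i' j h1 (by omega); have := hs i' j' j h2 h3
    have := h0 i i'; have := h0 j' j; linarith
  intro n
  induction n with
  | zero =>
    intro i j h1 h2 h3
    have : i = j := by omega
    subst this
    simp only [sub_self, mul_zero, abs_zero]; positivity
  | succ n ih =>
    intro i j h1 h2 h3
    rcases h1.eq_or_lt with h | hlt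
    · subst h
      simp only [sub_self, mul_zero, abs_zero]; positivity
    obtain ⟨m, him, hmj, hA, hB⟩ := davie_split w h0 hs i j hlt
    have half : ∀ r, 0 ≤ r → r ≤ w i j / 2 → r ^ (1/q) ≤ l * w i j ^ (1/q) := by
      intro r hr hr2
      rw [hl, ← Real.mul_rpow (by norm_num) (h0 _ _)]
      apply Real.rpow_le_rpow hr _ hq'; linarith
    have e1 := ih i m him (by omega) (by omega)
    have e2 := ih (m+1) j hmj h2 (by omega)
    have a1 := half _ (h0 _ _) hA
    have a2 := half _ (h0 _ _) hB
    have n1 : 0 ≤ w i m ^ (1/q) := Real.rpow_nonneg (h0 _ _) _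
    have n2 : 0 ≤ w (m+1) j ^ (1/q) := Real.rpow_nonneg (h0 _ _) _
    have m1 := hmono i j i m le_rfl him (by omega)
    have x1 := (hX m j hmj.le).trans (hmono i j m j him hmj.le le_rfl)
    have x2 := (hX (m+1) j hmj).trans (hmono i j (m+1) j (by omega) hmj le_rfl)
    have x3 := (hX i m him).trans m1
    have x4 := (hX m (m+1) (by omega)).trans (hmono i j m (m+1) him (by omega) hmj)
    have hdd := hd i j h1
    have np : 0 ≤ w i j ^ (1/q) := Real.rpow_nonneg (h0 _ _) _
    set P := w i j ^ (1/q) with hP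
    have f1 : |y m - y i| ≤ M * P + C * P^2 := by
      have : y m - y i = F (y i) * (X m - X i) + (y m - y i - F (y i) * (X m - X i)) := by ring
      rw [this]
      refine (abs_add_le _ _).trans ?_
      rw [abs_mul]
      have := mul_le_mul (hMN i (by omega)) x3 (abs_nonneg _) hM
      have : C * (w i m ^ (1/q))^2 ≤ C * P^2 := by gcongr
      linarith
    have f2 : |y (m+1) - y m| ≤ M * P := by
      rw [hy m, add_sub_cancel_left, abs_mul]
      exact mul_le_mul (hMN m (by omega)) x4 (abs_nonneg _) hM
    have g1 : |(F (y m) - F (y i)) * (X j - X m)| ≤ K * (M * P + C * P^2) * P := by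
      rw [abs_mul]
      exact mul_le_mul ((hF _ _).trans (by gcongr)) x1 (abs_nonneg _) (by positivity)
    have g2 : |(F (y (m+1)) - F (y m)) * (X j - X (m+1))| ≤ K * (M * P) * P := by
      rw [abs_mul]
      exact mul_le_mul ((hF _ _).trans (by gcongr)) x2 (abs_nonneg _) (by positivity)
    have e1' : C * (w i m ^ (1/q))^2 ≤ C * (l * P)^2 := by gcongr
    have e2' : C * (w (m+1) j ^ (1/q))^2 ≤ C * (l * P)^2 := by gcongr
    have key : y j - y i - F (y i) * (X j - X i) =
        (y m - y i - F (y i) * (X m - X i)) + 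
        (y j - y (m+1) - F (y (m+1)) * (X j - X (m+1))) +
        (F (y m) - F (y i)) * (X j - X m) + (F (y (m+1)) - F (y m)) * (X j - X (m+1)) := by
      rw [hy m]; ring
    rw [key]
    have t1 := abs_add_le ((y m - y i - F (y i) * (X m - X i)) + 
        (y j - y (m+1) - F (y (m+1)) * (X j - X (m+1))) +
        (F (y m) - F (y i)) * (X j - X m)) ((F (y (m+1)) - F (y m)) * (X j - X (m+1)))
    have t2 := abs_add_le ((y m - y i - F (y i) * (X m - X i)) + 
        (y j - y (m+1) - F (y (m+1)) * (X j - X (m+1)))) ((F (y m) - F (y i)) * (X j - X m))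
    have t3 := abs_add_le (y m - y i - F (y i) * (X m - X i))
        (y j - y (m+1) - F (y (m+1)) * (X j - X (m+1)))
    have s1 : K * C * P^2 * P ≤ K * C * P^2 * d := by gcongr
    have s2 := mul_le_mul_of_nonneg_right hCd (sq_nonneg P)
    nlinarith

lemma davie_local (K q : ℝ) (hK : 0 ≤ K) (hq : 1 < q) (hq2 : q < 2) :
    ∃ d > 0, ∃ c ≥ 0, ∀ (F : ℝ → ℝ) (_ : ∀ u v : ℝ, |F u - F v| ≤ K * |u - v|)
    (w : ℕ → ℕ → ℝ) (_ : ∀ i j, 0 ≤ w i j)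
    (_ : ∀ i j k, i ≤ j → j ≤ k → w i j + w j k ≤ w i k)
    (X y : ℕ → ℝ) (_ : ∀ i j, i ≤ j → |X j - X i| ≤ w i j ^ (1/q))
    (_ : ∀ i j, i ≤ j → w i j ^ (1/q) ≤ d)
    (_ : ∀ k, y (k+1) = y k + F (y k) * (X (k+1) - X k)),
    ∀ i j, i ≤ j →
      |y j - y i - F (y i) * (X j - X i)| ≤ c * |F (y 0)| * (w i j ^ (1/q))^2 := by
  set l := (1/2 : ℝ) ^ (1/q) with hl
  have hl2 : 2 * l^2 < 1 := by
    have h1 : l^2 = (1/2 : ℝ) ^ (2/q) := by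
      rw [hl, ← Real.rpow_natCast, ← Real.rpow_mul (by norm_num)]; congr 1; push_cast; ring
    have h2 : (1/2 : ℝ) ^ (2/q) < (1/2 : ℝ) ^ (1:ℝ) := by
      apply Real.rpow_lt_rpow_of_exponent_gt (by norm_num) (by norm_num)
      rw [lt_div_iff₀ (by linarith)]; linarith
    rw [Real.rpow_one] at h2
    rw [h1]; linarith
  set r := (1 - 2 * l^2)/2 with hr
  have hr0 : 0 < r := by rw [hr]; linarith
  set e := 2 * K / r with he
  have he0 : 0 ≤ e := by positivity
  -- d with K d ≤ r, K d ≤ 1, K e d^2 ≤ 1/2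
  obtain ⟨d, hd0, hd1, hd2, hd3⟩ : ∃ d > 0, K * d ≤ r ∧ K * d ≤ 1 ∧ K * (e * d^2) ≤ 1/2 := by
    refine ⟨min (min (r/(K+1)) (1/(K+1))) (min 1 (1/(2*(K*e+1)))), by positivity, ?_, ?_, ?_⟩
    · have : min (min (r/(K+1)) (1/(K+1))) (min 1 (1/(2*(K*e+1)))) ≤ r/(K+1) :=
        (min_le_left _ _).trans (min_le_left _ _)
      calc _ ≤ K * (r/(K+1)) := by gcongr
        _ ≤ (K+1) * (r/(K+1)) := by gcongr; linarith
        _ = r := by field_simp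
    · have : min (min (r/(K+1)) (1/(K+1))) (min 1 (1/(2*(K*e+1)))) ≤ 1/(K+1) :=
        (min_le_left _ _).trans (min_le_right _ _)
      calc _ ≤ K * (1/(K+1)) := by gcongr
        _ ≤ (K+1) * (1/(K+1)) := by gcongr; linarith
        _ = 1 := by field_simp
    · set d := min (min (r/(K+1)) (1/(K+1))) (min 1 (1/(2*(K*e+1))))
      have h1 : d ≤ 1 := (min_le_right _ _).trans (min_le_left _ _)
      have h2 : d ≤ 1/(2*(K*e+1)) := (min_le_right _ _).trans (min_le_right _ _)
      have h3 : 0 < d := by positivity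
      have h4 : 0 ≤ K * e := by positivity
      calc K * (e * d^2) = (K * e) * d * d := by ring
        _ ≤ (K * e + 1) * (1/(2*(K*e+1))) * 1 := by gcongr; linarith
        _ = 1/2 := by field_simp
  refine ⟨d, hd0, 4 * e, by positivity, ?_⟩
  intro F hF w h0 hs X y hX hd hy i j hij
  obtain ⟨k0, hk0, hk1⟩ := Finset.exists_max_image (Finset.range (j+1)) (fun k => |F (y k)|)
    ⟨0, by simp⟩
  set M := |F (y k0)| with hMdef
  have hM : 0 ≤ M := abs_nonneg _
  have step := davie_step K M (e * M) d l q hK hM (by positivity) (by linarith) hl (by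
      have h1 : e * r = 2 * K := by rw [he]; field_simp
      have h2 : K * d * (e * M) ≤ r * (e * M) := by gcongr
      have h3 : 2 * l^2 = 1 - 2 * r := by rw [hr]; ring
      rw [h3]
      nlinarith) F hF w h0 hs X y hX hd hy j
      (fun k hk => hk1 k (by simp; omega))
  have hM4 : M ≤ 4 * |F (y 0)| := by
    have hkj : k0 ≤ j := by simp at hk0; omega
    have h1 := step k0 0 k0 (by omega) hkj (by omega)
    have h2 := hX 0 k0 (by omega)
    have h3 := hd 0 k0 (by omega)
    have h3' : 0 ≤ w 0 k0 ^ (1/q) := Real.rpow_nonneg (h0 _ _) _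
    have h4 := hF (y k0) (y 0)
    have h5 : |y k0 - y 0| ≤ |F (y 0)| * d + e * M * d^2 := by
      have : y k0 - y 0 = F (y 0) * (X k0 - X 0) + (y k0 - y 0 - F (y 0) * (X k0 - X 0)) := by ring
      rw [this]
      refine (abs_add_le _ _).trans ?_
      rw [abs_mul]
      have a1 : |F (y 0)| * |X k0 - X 0| ≤ |F (y 0)| * d := by gcongr; linarith
      have a2 : e * M * (w 0 k0 ^ (1/q))^2 ≤ e * M * d^2 := by gcongr
      linarith
    have h6 : K * |y k0 - y 0| ≤ K * (|F (y 0)| * d + e * M * d^2) := by gcongr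
    have h7 : M ≤ |F (y 0)| + |F (y k0) - F (y 0)| := by
      have := abs_add_le (F (y 0)) (F (y k0) - F (y 0))
      rwa [add_sub_cancel] at this
    have h8 : K * d * |F (y 0)| ≤ 1 * |F (y 0)| := by gcongr
    have h9 : K * (e * d^2) * M ≤ 1/2 * M := by gcongr
    nlinarith
  refine (step j i j hij le_rfl (by omega)).trans ?_
  have : e * M ≤ 4 * e * |F (y 0)| := by nlinarith
  gcongr

structure Ctrl (x : ℝ → ℝ) (w : ℝ → ℝ → ℝ) (q a b : ℝ) : Prop where
  nonneg : ∀ s t, 0 ≤ w s t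
  super : ∀ s u t, a ≤ s → s ≤ u → u ≤ t → t ≤ b → w s u + w u t ≤ w s t
  incr : ∀ s t, a ≤ s → s ≤ t → t ≤ b → |x t - x s| ≤ w s t ^ (1/q)
  small : ∀ ε > 0, ∃ η > 0, ∀ s t, a ≤ s → s ≤ t → t ≤ b → t - s ≤ η → w s t ≤ ε

def YSol (F x : ℝ → ℝ) (w : ℝ → ℝ → ℝ) (q s t y₀ : ℝ) : Prop :=
  ∃ (y : ℝ → ℝ) (C : ℝ), 0 ≤ C ∧ y s = y₀ ∧ ∀ u v, s ≤ u → u ≤ v → v ≤ t →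
    |y v - y u - F (y u) * (x v - x u)| ≤ C * (w u v ^ (1/q))^2

lemma Ctrl.mono {x : ℝ → ℝ} {w : ℝ → ℝ → ℝ} {q a b : ℝ} (h : Ctrl x w q a b)
    {s t u v : ℝ} (h1 : a ≤ s) (h2 : s ≤ u) (h3 : u ≤ v) (h4 : v ≤ t) (h5 : t ≤ b) :
    w u v ≤ w s t := by
  have := h.super s u t h1 h2 (h3.trans h4) h5
  have := h.super u v t (h1.trans h2) h3 h4 h5
  have := h.nonneg s u; have := h.nonneg v t
  linarith

lemma Ctrl.phi_mono {x : ℝ → ℝ} {w : ℝ → ℝ → ℝ} {q a b : ℝ} (hq : 0 < q) (h : Ctrl x w q a b)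
    {s t u v : ℝ} (h1 : a ≤ s) (h2 : s ≤ u) (h3 : u ≤ v) (h4 : v ≤ t) (h5 : t ≤ b) :
    w u v ^ (1/q) ≤ w s t ^ (1/q) :=
  Real.rpow_le_rpow (h.nonneg _ _) (h.mono h1 h2 h3 h4 h5) (by positivity)

lemma Ctrl.phi_self {x : ℝ → ℝ} {w : ℝ → ℝ → ℝ} {q a b : ℝ} (hq : 0 < q) (h : Ctrl x w q a b)
    {s : ℝ} (h1 : a ≤ s) (h2 : s ≤ b) : w s s ^ (1/q) = 0 := by
  have := h.super s s s h1 le_rfl le_rfl h2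
  have h3 := h.nonneg s s
  have : w s s = 0 := by linarith
  rw [this, Real.zero_rpow (by positivity)]

lemma enum_finset (D : Finset ℝ) (s : ℝ) (hs : s ∈ D) (hmin : ∀ u ∈ D, s ≤ u) :
    ∃ t : ℕ → ℝ, Monotone t ∧ t 0 = s ∧ (∀ k, t k ∈ D) ∧ ∀ u ∈ D, ∃ k, t k = u := by
  have hc : 0 < D.card := Finset.card_pos.mpr ⟨s, hs⟩
  let f := D.orderEmbOfFin rfl
  have hm : ∀ k, f k ∈ D := fun k => Finset.orderEmbOfFin_mem D rfl k
  have hr : ∀ u ∈ D, ∃ k, f k = u := by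
    intro u hu
    have := Finset.range_orderEmbOfFin D rfl
    have : u ∈ Set.range f := by rw [this]; exact hu
    exact this
  have hmt : Monotone (fun k : ℕ => f ⟨min k (D.card - 1), by omega⟩) := by
    intro i j hij
    apply f.monotone
    simp only [Fin.mk_le_mk]; omega
  refine ⟨fun k => f ⟨min k (D.card - 1), by omega⟩, hmt, ?_, fun k => hm _, ?_⟩
  · obtain ⟨k, hk⟩ := hr s hs
    apply le_antisymm
    · rw [← hk]; apply f.monotone; rw [Fin.le_def]; simp
    · exact hmin _ (hm _)
  · intro u hu
    obtain ⟨k, hk⟩ := hr u hu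
    refine ⟨k, ?_⟩
    rw [← hk]
    show f _ = f k
    congr 1
    apply Fin.ext; simp; omega

noncomputable def eulerSeq (F : ℝ → ℝ) (X : ℕ → ℝ) (y₀ : ℝ) : ℕ → ℝ
  | 0 => y₀
  | k+1 => eulerSeq F X y₀ k + F (eulerSeq F X y₀ k) * (X (k+1) - X k)

lemma local_sol (K q : ℝ) (hK : 0 ≤ K) (hq : 1 < q) (hq2 : q < 2) :
    ∃ d > 0, ∀ (F : ℝ → ℝ) (_ : ∀ u v : ℝ, |F u - F v| ≤ K * |u - v|)
      (a b : ℝ) (x : ℝ → ℝ) (w : ℝ → ℝ → ℝ) (_ : Ctrl x w q a b) (s t y₀ : ℝ),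
      a ≤ s → s ≤ t → t ≤ b → w s t ^ (1/q) ≤ d → YSol F x w q s t y₀ := by
  obtain ⟨d, hd, c, hc, H⟩ := davie_local K q hK hq hq2
  refine ⟨d, hd, ?_⟩
  intro F hF a b x w hw s t y₀ has hst htb hwd
  have hq0 : 0 < q := by linarith
  set C := c * |F y₀| with hC
  have hC0 : 0 ≤ C := by positivity
  set B := |y₀| + |F y₀| * d + C * d^2 with hB
  have hFc : Continuous F := by
    have : LipschitzWith ⟨K, hK⟩ F := by
      apply LipschitzWith.of_dist_le_mul
      intro u v; rw [Real.dist_eq, Real.dist_eq]; exact hF u v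
    exact this.continuous
  -- discrete solutions
  have disc : ∀ D : Finset ℝ, ∃ Y : ℝ → ℝ, (∀ u, Y u ∈ Set.Icc (-B) B) ∧ Y s = y₀ ∧
      ∀ u ∈ D, ∀ v ∈ D, s ≤ u → u ≤ v → v ≤ t →
        |Y v - Y u - F (Y u) * (x v - x u)| ≤ C * (w u v ^ (1/q))^2 := by
    intro D
    classical
    let D' := insert s (D.filter (fun u => s ≤ u ∧ u ≤ t))
    have hD' : ∀ u ∈ D', s ≤ u ∧ u ≤ t := by
      intro u hu
      simp only [D', Finset.mem_insert, Finset.mem_filter] at hu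
      rcases hu with h | h
      · subst h; exact ⟨le_rfl, hst⟩
      · exact h.2
    obtain ⟨τ, hmono, hτ0, hτm, hτs⟩ := enum_finset D' s (by simp [D']) (fun u hu => (hD' u hu).1)
    have hτ : ∀ k, s ≤ τ k ∧ τ k ≤ t := fun k => hD' _ (hτm k)
    set y := eulerSeq F (fun k => x (τ k)) y₀ with hy
    have est := H F hF (fun i j => w (τ i) (τ j)) (fun i j => hw.nonneg _ _)
      (fun i j k h1 h2 => hw.super _ _ _ (has.trans (hτ i).1) (hmono h1) (hmono h2)
        ((hτ k).2.trans htb)) (fun k => x (τ k)) y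
      (fun i j h => hw.incr _ _ (has.trans (hτ i).1) (hmono h) ((hτ j).2.trans htb))
      (fun i j h => (hw.phi_mono hq0 has (hτ i).1 (hmono h) (hτ j).2 htb).trans hwd)
      (fun k => rfl)
    have hy0 : y 0 = y₀ := rfl
    rw [hy0] at est
    have bd : ∀ k, y k ∈ Set.Icc (-B) B := by
      intro k
      rw [Set.mem_Icc, ← abs_le]
      have e := est 0 k (by omega)
      have h2 : w (τ 0) (τ k) ^ (1/q) ≤ d := 
        (hw.phi_mono hq0 has (hτ 0).1 (hmono (Nat.zero_le k)) (hτ k).2 htb).trans hwd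
      have h1 := (hw.incr (τ 0) (τ k) (has.trans (hτ 0).1) (hmono (Nat.zero_le k)) ((hτ k).2.trans htb)).trans h2
      have h3 : 0 ≤ w (τ 0) (τ k) ^ (1/q) := Real.rpow_nonneg (hw.nonneg _ _) _
      have : y k = y₀ + F y₀ * (x (τ k) - x (τ 0)) + 
        (y k - y 0 - F (y 0) * (x (τ k) - x (τ 0))) := by rw [hy0]; ring
      rw [this]
      refine (abs_add_le _ _).trans (add_le_add ((abs_add_le _ _).trans ?_) (e.trans ?_))
      · rw [abs_mul]; gcongr
      · gcongr
    have hex : ∀ u, ∃ k, (u = s → k = 0) ∧ (u ∈ D' → τ k = u) := by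
      intro u
      by_cases h : u = s
      · exact ⟨0, fun _ => rfl, fun _ => by rw [hτ0, h]⟩
      · by_cases h' : u ∈ D'
        · obtain ⟨k, hk⟩ := hτs u h'
          exact ⟨k, fun e => absurd e h, fun _ => hk⟩
        · exact ⟨0, fun e => absurd e h, fun e => absurd e h'⟩
    choose κ hκ0 hκ using hex
    refine ⟨fun u => y (κ u), fun u => bd _, by simp [hκ0 s rfl, hy0], ?_⟩
    intro u hu v hv h1 h2 h3
    have hu' : u ∈ D' := by simp [D', hu, h1, h2.trans h3]
    have hv' : v ∈ D' := by simp [D', hv, h1.trans h2, h3]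
    rcases h2.eq_or_lt with h | h
    · subst h; simp only [sub_self, mul_zero, abs_zero]; positivity
    · have : κ u ≤ κ v := by
        by_contra hcon
        have := hmono (not_le.mp hcon).le
        rw [hκ u hu', hκ v hv'] at this
        linarith
      have := est _ _ this
      simpa only [hκ u hu', hκ v hv'] using this
  choose Y hYB hYs hYJ using disc
  let U : Ultrafilter (Finset ℝ) := Ultrafilter.of Filter.atTop
  have hU : (U : Filter (Finset ℝ)) ≤ Filter.atTop := Ultrafilter.of_le _
  have hcomp : IsCompact (Set.pi Set.univ (fun _ : ℝ => Set.Icc (-B) B)) :=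
    isCompact_univ_pi (fun _ => isCompact_Icc)
  obtain ⟨y, -, hy⟩ := hcomp.ultrafilter_le_nhds (U.map Y) (by
    simp only [Filter.le_principal_iff]
    rw [Ultrafilter.mem_coe, Ultrafilter.mem_map]
    exact Filter.mem_of_superset (Filter.univ_mem) (fun D _ => fun u _ => hYB D u))
  have hlim : Filter.Tendsto Y U (nhds y) := hy
  have hpt : ∀ u, Filter.Tendsto (fun D => Y D u) U (nhds (y u)) :=
    fun u => (tendsto_pi_nhds.mp hlim) u
  refine ⟨y, C, hC0, ?_, ?_⟩
  · refine tendsto_nhds_unique (hpt s) ?_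
    simp only [hYs]; exact tendsto_const_nhds
  · intro u v h1 h2 h3
    have T : Filter.Tendsto (fun D => |Y D v - Y D u - F (Y D u) * (x v - x u)|) U
        (nhds |y v - y u - F (y u) * (x v - x u)|) :=
      (((hpt v).sub (hpt u)).sub (((hFc.tendsto _).comp (hpt u)).mul_const _)).abs
    refine le_of_tendsto T ?_
    have ev : ∀ᶠ D : Finset ℝ in Filter.atTop, ({u, v} : Finset ℝ) ≤ D := Filter.eventually_ge_atTop _
    filter_upwards [hU ev] with D hD
    exact hYJ D u (hD (by simp)) v (hD (by simp)) h1 h2 h3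

lemma ysol_bound {F x : ℝ → ℝ} {w : ℝ → ℝ → ℝ} {K q a b : ℝ} (hK : 0 ≤ K) (hq : 0 < q)
    (hF : ∀ u v : ℝ, |F u - F v| ≤ K * |u - v|) (hw : Ctrl x w q a b) {s t C : ℝ} {y : ℝ → ℝ}
    (has : a ≤ s) (htb : t ≤ b) (hC : 0 ≤ C)
    (hy : ∀ u v, s ≤ u → u ≤ v → v ≤ t →
      |y v - y u - F (y u) * (x v - x u)| ≤ C * (w u v ^ (1/q))^2) :
    ∃ B D, 0 ≤ B ∧ 0 ≤ D ∧ (∀ u, s ≤ u → u ≤ t → |F (y u)| ≤ B) ∧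
      ∀ u v, s ≤ u → u ≤ v → v ≤ t → |y v - y u| ≤ D * w u v ^ (1/q) := by
  set P := w s t ^ (1/q) with hP
  have hP0 : 0 ≤ P := Real.rpow_nonneg (hw.nonneg _ _) _
  have gen : ∀ u v, s ≤ u → u ≤ v → v ≤ t → |y v - y u| ≤ (|F (y u)| + C * P) * w u v ^ (1/q) := by
    intro u v h1 h2 h3
    have n : 0 ≤ w u v ^ (1/q) := Real.rpow_nonneg (hw.nonneg _ _) _
    have m : w u v ^ (1/q) ≤ P := hw.phi_mono hq has h1 h2 h3 htb
    have i := hw.incr u v (has.trans h1) h2 (h3.trans htb)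
    have e := hy u v h1 h2 h3
    have : y v - y u = F (y u) * (x v - x u) + (y v - y u - F (y u) * (x v - x u)) := by ring
    rw [this]
    refine (abs_add_le _ _).trans ?_
    rw [abs_mul]
    have a1 : |F (y u)| * |x v - x u| ≤ |F (y u)| * w u v ^ (1/q) := by gcongr
    have a2 : C * w u v ^ (1/q) * w u v ^ (1/q) ≤ C * P * w u v ^ (1/q) := by gcongr
    nlinarith
  set B := |F (y s)| + K * ((|F (y s)| + C * P) * P) with hB
  have hFB : ∀ u, s ≤ u → u ≤ t → |F (y u)| ≤ B := by
    intro u h1 h2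
    have m : w s u ^ (1/q) ≤ P := hw.phi_mono hq has le_rfl h1 h2 htb
    have h3 := gen s u le_rfl h1 h2
    have h4 : |y u - y s| ≤ (|F (y s)| + C * P) * P := h3.trans (by gcongr)
    have h7 : |F (y u)| ≤ |F (y s)| + |F (y u) - F (y s)| := by
      have := abs_add_le (F (y s)) (F (y u) - F (y s))
      rwa [add_sub_cancel] at this
    have h8 := (hF (y u) (y s)).trans (mul_le_mul_of_nonneg_left h4 hK)
    linarith
  refine ⟨B, B + C * P, by positivity, by positivity, hFB, ?_⟩
  intro u v h1 h2 h3
  refine (gen u v h1 h2 h3).trans ?_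
  have n : 0 ≤ w u v ^ (1/q) := Real.rpow_nonneg (hw.nonneg _ _) _
  have := hFB u h1 (h2.trans h3)
  gcongr

lemma glue {F x : ℝ → ℝ} {w : ℝ → ℝ → ℝ} {K q a b : ℝ} (hK : 0 ≤ K) (hq : 0 < q)
    (hF : ∀ u v : ℝ, |F u - F v| ≤ K * |u - v|) (hw : Ctrl x w q a b) {s r t : ℝ}
    (has : a ≤ s) (hsr : s ≤ r) (hrt : r ≤ t) (htb : t ≤ b)
    (h1 : ∀ y₀, YSol F x w q s r y₀) (h2 : ∀ y₀, YSol F x w q r t y₀) (y₀ : ℝ) :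
    YSol F x w q s t y₀ := by
  obtain ⟨y, C, hC, hys, hy⟩ := h1 y₀
  obtain ⟨z, C', hC', hzs, hz⟩ := h2 (y r)
  obtain ⟨B, D, hB, hD, hBy, hDy⟩ := ysol_bound hK hq hF hw has (hrt.trans htb) hC hy
  let Y : ℝ → ℝ := fun u => if u ≤ r then y u else z u
  have Y1 : ∀ u, u ≤ r → Y u = y u := fun u h => by simp [Y, h]
  have Y2 : ∀ u, r ≤ u → Y u = z u := by
    intro u h
    rcases h.eq_or_lt with h | h
    · subst h; simp [Y, hzs]
    · simp [Y, not_le.mpr h]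
  refine ⟨Y, C + C' + K * D, by positivity, by rw [Y1 s hsr, hys], ?_⟩
  intro u v hsu huv hvt
  have n : 0 ≤ w u v ^ (1/q) := Real.rpow_nonneg (hw.nonneg _ _) _
  have KD : 0 ≤ K * D := by positivity
  rcases le_total v r with hv | hv
  · rw [Y1 u (huv.trans hv), Y1 v hv]
    refine (hy u v hsu huv hv).trans ?_
    gcongr; linarith
  rcases le_total r u with hu | hu
  · rw [Y2 u hu, Y2 v hv]
    refine (hz u v hu huv hvt).trans ?_
    gcongr; linarith
  rw [Y1 u hu, Y2 v hv]
  have e1 := hy u r hsu hu le_rfl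
  have e2 := hz r v le_rfl hv hvt
  have e3 := hDy u r hsu hu le_rfl
  have m1 : w u r ^ (1/q) ≤ w u v ^ (1/q) := hw.phi_mono hq (has.trans hsu) le_rfl hu hv (hvt.trans htb)
  have m2 : w r v ^ (1/q) ≤ w u v ^ (1/q) := hw.phi_mono hq (has.trans hsu) hu hv le_rfl (hvt.trans htb)
  have n1 : 0 ≤ w u r ^ (1/q) := Real.rpow_nonneg (hw.nonneg _ _) _
  have n2 : 0 ≤ w r v ^ (1/q) := Real.rpow_nonneg (hw.nonneg _ _) _
  have i := (hw.incr r v (has.trans hsr) hv (hvt.trans htb)).trans m2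
  set P := w u v ^ (1/q) with hP
  have key : z v - y u - F (y u) * (x v - x u) = (y r - y u - F (y u) * (x r - x u)) +
      (z v - z r - F (z r) * (x v - x r)) + (F (y r) - F (y u)) * (x v - x r) := by
    rw [hzs]; ring
  rw [key]
  have g : |(F (y r) - F (y u)) * (x v - x r)| ≤ K * (D * P) * P := by
    rw [abs_mul]
    refine mul_le_mul ((hF _ _).trans ?_) i (abs_nonneg _) (by positivity)
    have : D * w u r ^ (1/q) ≤ D * P := by gcongr
    exact mul_le_mul_of_nonneg_left (e3.trans this) hK
  have f1 : C * (w u r ^ (1/q))^2 ≤ C * P^2 := by gcongr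
  have f2 : C' * (w r v ^ (1/q))^2 ≤ C' * P^2 := by gcongr
  refine (abs_add_le _ _).trans ((add_le_add (abs_add_le _ _) le_rfl).trans ?_)
  nlinarith

lemma global_sol {F x : ℝ → ℝ} {w : ℝ → ℝ → ℝ} {K q a b : ℝ} (hK : 0 ≤ K) (hq : 1 < q) (hq2 : q < 2)
    (hF : ∀ u v : ℝ, |F u - F v| ≤ K * |u - v|) (hw : Ctrl x w q a b) (hab : a ≤ b) (y₀ : ℝ) :
    YSol F x w q a b y₀ := by
  have hq0 : 0 < q := by linarith
  obtain ⟨d, hd, H⟩ := local_sol K q hK hq hq2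
  obtain ⟨η, hη, hs⟩ := hw.small (d ^ q) (by positivity)
  have base : ∀ s t, a ≤ s → s ≤ t → t ≤ b → t - s ≤ η → ∀ y₀, YSol F x w q s t y₀ := by
    intro s t h1 h2 h3 h4 y₀
    apply H F hF a b x w hw s t y₀ h1 h2 h3
    calc w s t ^ (1/q) ≤ (d^q) ^ (1/q) :=
          Real.rpow_le_rpow (hw.nonneg _ _) (hs s t h1 h2 h3 h4) (by positivity)
      _ = d := by rw [← Real.rpow_mul hd.le, mul_one_div_cancel hq0.ne', Real.rpow_one]
  have ind : ∀ n : ℕ, ∀ t, a ≤ t → t ≤ b → t - a ≤ n * η → ∀ y₀, YSol F x w q a t y₀ := by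
    intro n
    induction n with
    | zero => 
      intro t h1 h2 h3
      apply base a t le_rfl h1 h2
      simp at h3; linarith
    | succ n ih =>
      intro t h1 h2 h3
      push_cast at h3
      rcases le_total (t - η) a with h | h
      · exact base a t le_rfl h1 h2 (by linarith)
      · exact glue hK hq0 hF hw le_rfl h (by linarith) h2 (ih (t - η) h (by linarith) (by linarith))
          (base (t - η) t h (by linarith) h2 (by linarith))
  obtain ⟨n, hn⟩ := exists_nat_ge ((b - a)/η)
  exact ind n b hab le_rfl (by rwa [div_le_iff₀ hη] at hn) y₀

inductive PChain (g : ℝ → ℝ → ℝ) (s : ℝ) : ℝ → ℝ → Prop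
  | nil : PChain g s s 0
  | snoc (u v r : ℝ) : PChain g s u r → u < v → PChain g s v (r + g u v)

lemma PChain.le {g : ℝ → ℝ → ℝ} {s t r : ℝ} (h : PChain g s t r) : s ≤ t := by
  induction h with
  | nil => exact le_rfl
  | snoc u v r _ h ih => linarith

lemma PChain.append {g : ℝ → ℝ → ℝ} {s u t r r' : ℝ} (h : PChain g s u r) (h' : PChain g u t r') :
    PChain g s t (r + r') := by
  induction h' with
  | nil => simpa using h
  | snoc v z r' _ hl ih => rw [← add_assoc]; exact PChain.snoc _ _ _ ih hl

lemma PChain.nonneg {g : ℝ → ℝ → ℝ} (hg : ∀ u v, 0 ≤ g u v) {s t r : ℝ} (h : PChain g s t r) :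
    0 ≤ r := by
  induction h with
  | nil => exact le_rfl
  | snoc u v r _ h ih => have := hg u v; linarith

lemma PChain.compare {g g' : ℝ → ℝ → ℝ} {c s t r : ℝ} (h : PChain g s t r) :
    (∀ u v, s ≤ u → u ≤ v → v ≤ t → g u v ≤ c * g' u v) → ∃ r', PChain g' s t r' ∧ r ≤ c * r' := by
  induction h with
  | nil => intro _; exact ⟨0, PChain.nil, by simp⟩
  | snoc u v r hc h ih =>
    intro H
    obtain ⟨r', h1, h2⟩ := ih (fun u' v' a1 a2 a3 => H u' v' a1 a2 (by linarith))
    refine ⟨_, PChain.snoc _ _ _ h1 h, ?_⟩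
    have := H u v hc.le h.le le_rfl
    linarith

lemma PChain.toFin {g : ℝ → ℝ → ℝ} {s t r : ℝ} (h : PChain g s t r) :
    ∃ (n : ℕ) (τ : Fin (n+1) → ℝ), StrictMono τ ∧ (∀ i, τ i ∈ Set.Icc s t) ∧ τ (Fin.last n) = t ∧
      ∑ i : Fin n, g (τ i.castSucc) (τ i.succ) = r := by
  induction h with
  | nil => exact ⟨0, fun _ => s, fun i j h => absurd h (by have := i.2; have := j.2; rw [Fin.lt_def]; omega), by simp, rfl, by simp⟩
  | snoc u v r hc h ih =>
    obtain ⟨n, τ, h1, h2, h3, h4⟩ := ih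
    refine ⟨n+1, Fin.snoc (α := fun _ => ℝ) τ v, ?_, ?_, by simp, ?_⟩
    · rw [Fin.strictMono_iff_lt_succ]
      intro i
      refine Fin.lastCases ?_ (fun j => ?_) i
      · rw [Fin.snoc_castSucc, Fin.succ_last, Fin.snoc_last, h3]; exact h
      · rw [Fin.snoc_castSucc, Fin.succ_castSucc, Fin.snoc_castSucc]
        exact h1 Fin.castSucc_lt_succ
    · intro i
      refine Fin.lastCases ?_ (fun j => ?_) i
      · rw [Fin.snoc_last]; exact ⟨by have := hc.le; linarith, le_rfl⟩
      · rw [Fin.snoc_castSucc]; exact ⟨(h2 j).1, (h2 j).2.trans h.le⟩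
    · rw [Fin.sum_univ_castSucc, Fin.snoc_castSucc, Fin.succ_last, Fin.snoc_last, h3, ← h4]
      congr 1
      refine Finset.sum_congr rfl (fun i _ => ?_)
      rw [Fin.snoc_castSucc, Fin.succ_castSucc, Fin.snoc_castSucc]

lemma pVar_sum_le {x : ℝ → ℝ} {p a b : ℝ} (hx : pVar x p a b < ⊤) {n : ℕ} {τ : Fin (n+1) → ℝ}
    (h1 : StrictMono τ) (h2 : ∀ i, τ i ∈ Set.Icc a b) :
    ∑ i : Fin n, |x (τ i.succ) - x (τ i.castSucc)| ^ p ≤ (pVar x p a b).toReal := by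
  have : ENNReal.ofReal (∑ i : Fin n, |x (τ i.succ) - x (τ i.castSucc)| ^ p) ≤ pVar x p a b := by
    rw [ENNReal.ofReal_sum_of_nonneg (fun i _ => by positivity)]
    unfold pVar
    exact le_iSup_of_le n (le_iSup_of_le τ (le_iSup_of_le h1 (le_iSup_of_le h2 le_rfl)))
  exact (ENNReal.ofReal_le_iff_le_toReal hx.ne).mp this

lemma exists_ctrl (p q : ℝ) (hp : 1 < p) (hpq : p < q) (a b : ℝ) (x : ℝ → ℝ)
    (hxc : ContinuousOn x (Set.Icc a b)) (hx : pVar x p a b < ⊤) :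
    ∃ w, Ctrl x w q a b := by
  set V := (pVar x p a b).toReal with hV
  have hV0 : 0 ≤ V := ENNReal.toReal_nonneg
  set g : ℝ → ℝ → ℝ := fun u v => |x v - x u| ^ q with hg
  have hg0 : ∀ u v, 0 ≤ g u v := fun u v => by positivity
  have main : ∀ d s t r, 0 ≤ d → a ≤ s → t ≤ b →
      (∀ u v, s ≤ u → u ≤ v → v ≤ t → |x v - x u| ≤ d) → PChain g s t r → r ≤ d^(q-p) * V := by
    intro d s t r hd has htb hosc hch
    obtain ⟨r', h1, h2⟩ := hch.compare (g' := fun u v => |x v - x u| ^ p) (c := d^(q-p)) (by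
      intro u v a1 a2 a3
      have h := hosc u v a1 a2 a3
      simp only [hg]
      calc |x v - x u| ^ q = |x v - x u| ^ (q-p) * |x v - x u| ^ p := by
            rw [← Real.rpow_add_of_nonneg (abs_nonneg _) (by linarith) (by linarith)]
            congr 1; ring
        _ ≤ d^(q-p) * |x v - x u| ^ p := by
            have := Real.rpow_le_rpow (abs_nonneg _) h (by linarith : 0 ≤ q-p)
            gcongr)
    obtain ⟨n, τ, k1, k2, k3, k4⟩ := h1.toFin
    have := pVar_sum_le hx k1 (fun i => ⟨has.trans (k2 i).1, (k2 i).2.trans htb⟩)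
    rw [k4] at this
    refine h2.trans ?_
    gcongr
  obtain ⟨R, hR⟩ := (isCompact_Icc.image_of_continuousOn hxc).isBounded.exists_norm_le
  have hR' : ∀ u, a ≤ u → u ≤ b → |x u| ≤ R := fun u h1 h2 => hR _ ⟨u, ⟨h1, h2⟩, rfl⟩
  have bdd : ∀ s t, a ≤ s → t ≤ b → BddAbove {r | PChain g s t r} := by
    intro s t h1 h2
    refine ⟨(2 * |R|)^(q-p) * V, fun r hr => main _ s t r (by positivity) h1 h2 ?_ hr⟩
    intro u v a1 a2 a3
    have b1 := hR' u (by linarith) (by linarith)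
    have b2 := hR' v (by linarith) (by linarith)
    have := abs_sub (x v) (x u)
    have := le_abs_self R
    linarith
  have ne : ∀ s t, s ≤ t → {r | PChain g s t r}.Nonempty := by
    intro s t h
    rcases h.eq_or_lt with h | h
    · subst h; exact ⟨0, PChain.nil⟩
    · exact ⟨_, PChain.snoc _ _ _ PChain.nil h⟩
  refine ⟨fun s t => sSup {r | PChain g s t r}, ?_, ?_, ?_, ?_⟩
  · intro s t
    exact Real.sSup_nonneg (fun r hr => PChain.nonneg hg0 hr)
  · intro s u t h1 h2 h3 h4
    have k : ∀ r r', PChain g s u r → PChain g u t r' → r + r' ≤ sSup {r | PChain g s t r} :=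
      fun r r' h h' => le_csSup (bdd s t h1 h4) (h.append h')
    have k2 : ∀ r', PChain g u t r' → 
        sSup {r | PChain g s u r} ≤ sSup {r | PChain g s t r} - r' := by
      intro r' h'
      exact csSup_le (ne s u h2) (fun r hr => by have := k r r' hr h'; linarith)
    have k3 : sSup {r | PChain g u t r} ≤ sSup {r | PChain g s t r} - sSup {r | PChain g s u r} :=
      csSup_le (ne u t h3) (fun r' hr => by have := k2 r' hr; linarith)
    linarith
  · intro s t h1 h2 h3
    have : g s t ≤ sSup {r | PChain g s t r} := by
      rcases h2.eq_or_lt with h | h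
      · subst h
        have : g s s = 0 := by simp only [hg, sub_self, abs_zero]; exact Real.zero_rpow (by linarith)
        rw [this]; exact Real.sSup_nonneg (fun r hr => PChain.nonneg hg0 hr)
      · refine le_csSup (bdd s t h1 h3) ?_
        have := PChain.snoc (g := g) _ _ _ PChain.nil h
        rwa [zero_add] at this
    calc |x t - x s| = (g s t)^(1/q) := by
          simp only [hg]
          rw [← Real.rpow_mul (abs_nonneg _), mul_one_div_cancel (by linarith), Real.rpow_one]
      _ ≤ _ := Real.rpow_le_rpow (hg0 _ _) this (by
          have : 0 < q := by linarith
          positivity)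
  · intro ε hε
    set d := (ε/(V+1))^(1/(q-p)) with hd
    have hd0 : 0 < d := by positivity
    have huc := isCompact_Icc.uniformContinuousOn_of_continuous hxc
    rw [Metric.uniformContinuousOn_iff] at huc
    obtain ⟨η, hη, hu⟩ := huc d hd0
    refine ⟨η/2, by positivity, ?_⟩
    intro s t h1 h2 h3 h4
    refine csSup_le (ne s t h2) (fun r hr => ?_)
    refine (main d s t r hd0.le h1 h3 ?_ hr).trans ?_
    · intro u v a1 a2 a3
      have := hu v ⟨by linarith, by linarith⟩ u ⟨by linarith, by linarith⟩ (by
        rw [Real.dist_eq, abs_of_nonneg (by linarith)]; linarith)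
      rw [Real.dist_eq] at this; exact this.le
    · rw [hd, ← Real.rpow_mul (by positivity), one_div_mul_cancel (by linarith), Real.rpow_one,
        div_mul_eq_mul_div, div_le_iff₀ (by positivity)]
      nlinarith

lemma ctrl_sum {x : ℝ → ℝ} {w : ℝ → ℝ → ℝ} {q a b : ℝ} (hw : Ctrl x w q a b) :
    ∀ (n : ℕ) (τ : Fin (n+1) → ℝ), Monotone τ → (∀ i, τ i ∈ Set.Icc a b) →
      ∑ i : Fin n, w (τ i.castSucc) (τ i.succ) ≤ w (τ 0) (τ (Fin.last n)) := by
  intro n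
  induction n with
  | zero => intro τ _ _; simpa using hw.nonneg _ _
  | succ n ih =>
    intro τ h1 h2
    rw [Fin.sum_univ_castSucc]
    have := ih (fun i => τ i.castSucc) (fun i j h => h1 (by simpa using h)) (fun i => h2 _)
    have h3 := hw.super (τ 0) (τ (Fin.last n).castSucc) (τ (Fin.last (n+1))) (h2 _).1
      (h1 (Fin.zero_le _)) (h1 (Fin.le_last _)) (h2 _).2
    simp only [Fin.succ_castSucc, Fin.succ_last, Fin.castSucc_zero] at *
    linarith

lemma fin_tele (y : ℝ → ℝ) : ∀ (n : ℕ) (τ : Fin (n+1) → ℝ),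
      ∑ i : Fin n, (y (τ i.succ) - y (τ i.castSucc)) = y (τ (Fin.last n)) - y (τ 0) := by
  intro n
  induction n with
  | zero => intro τ; simp
  | succ n ih =>
    intro τ
    rw [Fin.sum_univ_castSucc]
    have := ih (fun i => τ i.castSucc)
    simp only [Fin.succ_castSucc, Fin.succ_last, Fin.castSucc_zero] at *
    linarith

/-- Existence of a solution of finite `p`-variation to the integral equation
`y(t) = y₀ + ∫_a^t F(y(s)) dx(s)` for a globally `1`-Lipschitz `F`. -/
theorem integral_equation_solution_lipschitz
    (p : ℝ) (hp : 1 < p) (hp2 : p < 2) (a b : ℝ) (hab : a < b) (y₀ : ℝ)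
    (x : ℝ → ℝ) (hxc : ContinuousOn x (Set.Icc a b)) (hx : pVar x p a b < ⊤)
    (F : ℝ → ℝ) (K : ℝ) (hK : 0 ≤ K)
    (hF : ∀ u v : ℝ, |F u - F v| ≤ K * |u - v|) :
    ∃ y : ℝ → ℝ, pVar y p a b < ⊤ ∧
      ∀ t ∈ Set.Icc a b, RSIntegral (fun s => F (y s)) x a t (y t - y₀) := by
  obtain ⟨q, hpq, hq2⟩ := exists_between hp2
  have hq : 1 < q := by linarith
  have hq0 : 0 < q := by linarith
  obtain ⟨w, hw⟩ := exists_ctrl p q hp hpq a b x hxc hx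
  obtain ⟨y, C, hC, hya, hy⟩ := global_sol hK hq hq2 hF hw hab.le y₀
  obtain ⟨B, D, hB, hD, hBy, hDy⟩ := ysol_bound hK hq0 hF hw le_rfl le_rfl hC hy
  set W := w a b with hW
  have hW0 : 0 ≤ W := hw.nonneg _ _
  have hpow : ∀ e : ℝ, 1 ≤ e → ∀ r m : ℝ, 0 ≤ r → r ≤ m → r ^ e ≤ m^(e-1) * r := by
    intro e he r m h1 h2
    calc r ^ e = r^((e-1) + 1) := by congr 1; ring
      _ = r^(e-1) * r := by
        rw [Real.rpow_add_of_nonneg h1 (by linarith) (by norm_num), Real.rpow_one]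
      _ ≤ m^(e-1) * r := by
        have := Real.rpow_le_rpow h1 h2 (by linarith : 0 ≤ e-1)
        gcongr
  refine ⟨y, ?_, ?_⟩
  · set E := 2^p * (B^p * (pVar x p a b).toReal + C^p * (W^(2*p/q-1) * W)) with hE
    refine lt_of_le_of_lt (b := ENNReal.ofReal E) ?_ ENNReal.ofReal_lt_top
    unfold pVar
    refine iSup_le fun n => iSup_le fun τ => iSup_le fun h1 => iSup_le fun h2 => ?_
    rw [← ENNReal.ofReal_sum_of_nonneg (fun i _ => by positivity)]
    apply ENNReal.ofReal_le_ofReal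
    have term : ∀ i : Fin n, |y (τ i.succ) - y (τ i.castSucc)| ^ p ≤
        2^p * (B^p * |x (τ i.succ) - x (τ i.castSucc)|^p + 
          C^p * (W^(2*p/q-1) * w (τ i.castSucc) (τ i.succ))) := by
      intro i
      have hu := h2 i.castSucc
      have hv := h2 i.succ
      have huv : τ i.castSucc ≤ τ i.succ := (h1 Fin.castSucc_lt_succ).le
      set u := τ i.castSucc
      set v := τ i.succ
      have e := hy u v hu.1 huv hv.2
      have n : 0 ≤ w u v := hw.nonneg _ _
      have n' : 0 ≤ w u v ^ (1/q) := Real.rpow_nonneg n _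
      set A1 := B * |x v - x u| with hA1
      set A2 := C * (w u v ^ (1/q))^2 with hA2
      have p1 : 0 ≤ A1 := by positivity
      have p2 : 0 ≤ A2 := by positivity
      have s1 : |y v - y u| ≤ A1 + A2 := by
        have : y v - y u = F (y u) * (x v - x u) + (y v - y u - F (y u) * (x v - x u)) := by ring
        rw [this]
        refine (abs_add_le _ _).trans (add_le_add ?_ e)
        rw [abs_mul]
        have := hBy u hu.1 hu.2
        exact mul_le_mul_of_nonneg_right this (abs_nonneg _)
      have s2 : (A1 + A2)^p ≤ 2^p * (A1^p + A2^p) := by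
        have p0 : 0 ≤ p := by linarith
        have q1 : 0 ≤ A1^p := by positivity
        have q2 : 0 ≤ A2^p := by positivity
        have q3 : (0:ℝ) ≤ 2^p := by positivity
        rcases le_total A1 A2 with h | h
        · calc (A1+A2)^p ≤ (2*A2)^p := Real.rpow_le_rpow (by positivity) (by linarith) p0
            _ = 2^p * A2^p := Real.mul_rpow (by norm_num) p2
            _ ≤ _ := by gcongr; linarith
        · calc (A1+A2)^p ≤ (2*A1)^p := Real.rpow_le_rpow (by positivity) (by linarith) p0
            _ = 2^p * A1^p := Real.mul_rpow (by norm_num) p1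
            _ ≤ _ := by gcongr; linarith
      have s3 : A1^p = B^p * |x v - x u|^p := Real.mul_rpow hB (abs_nonneg _)
      have s4 : A2^p = C^p * w u v ^ (2*p/q) := by
        rw [hA2, Real.mul_rpow hC (by positivity), ← Real.rpow_natCast, ← Real.rpow_mul n,
          ← Real.rpow_mul n]
        congr 2; push_cast; ring
      have s5 := hpow (2*p/q) (by rw [le_div_iff₀ hq0]; linarith) (w u v) W n
        (hw.mono le_rfl hu.1 huv hv.2 le_rfl)
      calc |y v - y u|^p ≤ (A1 + A2)^p := Real.rpow_le_rpow (abs_nonneg _) s1 (by linarith)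
        _ ≤ 2^p * (A1^p + A2^p) := s2
        _ ≤ _ := by rw [s3, s4]; gcongr
    refine (Finset.sum_le_sum (fun i _ => term i)).trans ?_
    rw [← Finset.mul_sum, Finset.sum_add_distrib, ← Finset.mul_sum, ← Finset.mul_sum,
      ← Finset.mul_sum]
    have k1 := pVar_sum_le hx h1 h2
    have k2 := (ctrl_sum hw n τ h1.monotone h2).trans
      (hw.mono le_rfl (h2 0).1 (h1.monotone (Fin.zero_le _)) (h2 (Fin.last n)).2 le_rfl)
    rw [hE]
    gcongr
  · intro t ht ε hε
    have hθ : 1 < 2/q := by rw [lt_div_iff₀ hq0]; linarith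
    set G := K * D + C with hG
    have hG0 : 0 ≤ G := by positivity
    set κ := ε / (G * W + 1) with hκ
    have hGW : 0 ≤ G * W := by positivity
    have hκ0 : 0 < κ := by positivity
    obtain ⟨η, hη, hs⟩ := hw.small (κ^(1/(2/q-1))) (by positivity)
    refine ⟨η, hη, ?_⟩
    intro n τ ξ h1 h2 h3 h4 h5
    have hτ : ∀ i, τ i ∈ Set.Icc a b := fun i =>
      ⟨by rw [← h2]; exact h1.monotone (Fin.zero_le _),
       le_trans (by rw [← h3]; exact h1.monotone (Fin.le_last _)) ht.2⟩
    have tele := fin_tele y n τ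
    rw [h2, h3, hya] at tele
    rw [← tele, ← Finset.sum_sub_distrib]
    have term : ∀ i : Fin n, |F (y (ξ i)) * (x (τ i.succ) - x (τ i.castSucc)) - 
        (y (τ i.succ) - y (τ i.castSucc))| ≤ G * (κ * w (τ i.castSucc) (τ i.succ)) := by
      intro i
      have hu := hτ i.castSucc
      have hv := hτ i.succ
      have huv : τ i.castSucc ≤ τ i.succ := (h1 Fin.castSucc_lt_succ).le
      have hi := h4 i
      have hsm := hs _ _ hu.1 huv hv.2 (h5 i).le
      set u := τ i.castSucc
      set v := τ i.succ
      have e := hy u v hu.1 huv hv.2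
      have n : 0 ≤ w u v := hw.nonneg _ _
      have n' : 0 ≤ w u v ^ (1/q) := Real.rpow_nonneg n _
      have s5 := hpow (2/q) hθ.le (w u v) _ n hsm
      rw [← Real.rpow_mul hκ0.le, one_div_mul_cancel (by linarith), Real.rpow_one] at s5
      have s6 : (w u v ^ (1/q))^2 = w u v ^ (2/q) := by
        rw [← Real.rpow_natCast, ← Real.rpow_mul n]; congr 1; push_cast; ring
      have i1 := hw.incr u v hu.1 huv hv.2
      have i2 : |y (ξ i) - y u| ≤ D * w u v ^ (1/q) :=
        (hDy u (ξ i) hu.1 hi.1 (hi.2.trans hv.2)).trans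
          (mul_le_mul_of_nonneg_left (hw.phi_mono hq0 hu.1 le_rfl hi.1 hi.2 hv.2) hD)
      have key : F (y (ξ i)) * (x v - x u) - (y v - y u) = (F (y (ξ i)) - F (y u)) * (x v - x u) -
          (y v - y u - F (y u) * (x v - x u)) := by ring
      rw [key]
      have g1 : |(F (y (ξ i)) - F (y u)) * (x v - x u)| ≤ 
          K * (D * w u v ^ (1/q)) * w u v ^ (1/q) := by
        rw [abs_mul]
        exact mul_le_mul ((hF _ _).trans (mul_le_mul_of_nonneg_left i2 hK)) i1 (abs_nonneg _)
          (by positivity)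
      calc _ ≤ _ := abs_sub _ _
        _ ≤ K * (D * w u v ^ (1/q)) * w u v ^ (1/q) + C * (w u v ^ (1/q))^2 := add_le_add g1 e
        _ = G * (w u v ^ (1/q))^2 := by rw [hG]; ring
        _ ≤ _ := by rw [s6]; gcongr
    refine lt_of_le_of_lt ((Finset.abs_sum_le_sum_abs _ _).trans
      (Finset.sum_le_sum (fun i _ => term i))) ?_
    rw [← Finset.mul_sum, ← Finset.mul_sum]
    have k2 := (ctrl_sum hw n τ h1.monotone hτ).trans
      (hw.mono le_rfl (hτ 0).1 (h1.monotone (Fin.zero_le _)) (hτ (Fin.last n)).2 le_rfl)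
    calc _ ≤ G * (κ * W) := by gcongr
      _ = κ * (G * W) := by ring
      _ < κ * (G * W + 1) := by nlinarith
      _ = ε := by rw [hκ]; field_simp
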